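/- Parseval identity for finite groups: for f₁, f₂ : G → ℂ, Σ_{x∈G} f₁(x) f₂(x⁻¹) = (1/|G|) Σ_{Π∈Ĝ} d_Π · tr(Π(f₁)Π(f₂)). -/

import Mathlib

/-- A representation is irreducible: the space is nonzero and the only invariant subspaces are
`⊥` and `⊤`. -/
def IsIrreducibleRep {G V : Type*} [Group G] [AddCommGroup V] [Module ℂ V]
    (ρ : Representation ℂ G V) : Prop :=
  Nontrivial V ∧ ∀ U : Submodule ℂ V, (∀ g : G, ∀ v ∈ U, ρ g v ∈ U) → U = ⊥ ∨ U = ⊤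

/-- Equivalence of representations: an invertible intertwining operator exists. -/
def RepEquiv {G V W : Type*} [Group G] [AddCommGroup V] [Module ℂ V]
    [AddCommGroup W] [Module ℂ W]
    (ρ : Representation ℂ G V) (π : Representation ℂ G W) : Prop :=
  ∃ e : V ≃ₗ[ℂ] W, ∀ (g : G) (v : V), e (ρ g v) = π g (e v)

open Representation in
theorem isIrr_of {G V : Type*} [Group G] [AddCommGroup V] [Module ℂ V]
    (ρ : Representation ℂ G V) (h : IsIrreducibleRep ρ) : ρ.IsIrreducible := by
  obtain ⟨hn, hU⟩ := h
  refine { exists_pair_ne := ⟨⊥, ⊤, ?_⟩, eq_bot_or_eq_top := ?_ }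
  · intro h
    have h2 : (⊥ : Submodule ℂ V) = ⊤ := congrArg Subrepresentation.toSubmodule h
    exact bot_ne_top h2
  · intro σ
    rcases hU σ.toSubmodule (fun g v hv => σ.apply_mem_toSubmodule g hv) with h | h
    · left; exact Subrepresentation.toSubmodule_injective h
    · right; exact Subrepresentation.toSubmodule_injective h

theorem class_sum_zero {G V : Type*} [Group G] [Fintype G] [AddCommGroup V] [Module ℂ V]
    [FiniteDimensional ℂ V] (ρ : Representation ℂ G V) (h : IsIrreducibleRep ρ)
    (φ : G → ℂ) (hφ : ∀ g x, φ (g⁻¹ * x * g) = φ x)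
    (h0 : ∑ g, φ g * ρ.character g = 0) : ∑ g, φ g • ρ g = 0 := by
  have := isIrr_of ρ h
  have := h.1
  have hcomm : ∀ g : G, (∑ x, φ x • ρ x) ∘ₗ ρ g = ρ g ∘ₗ (∑ x, φ x • ρ x) := by
    intro g
    change (∑ x, φ x • ρ x) * ρ g = ρ g * (∑ x, φ x • ρ x)
    rw [Finset.sum_mul, Finset.mul_sum]
    refine Fintype.sum_equiv (MulAut.conj g⁻¹).toEquiv _ _ (fun x => ?_)
    simp only [MulEquiv.toEquiv_eq_coe, MulEquiv.coe_toEquiv, MulAut.conj_apply, inv_inv, hφ,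
      smul_mul_assoc, mul_smul_comm, ← map_mul]
    congr 2
    group
  let T : Representation.IntertwiningMap ρ ρ := ⟨∑ x, φ x • ρ x, hcomm⟩
  obtain ⟨c, hc⟩ :=
    (Representation.IsIrreducible.algebraMap_intertwiningMap_bijective_of_isAlgClosed (ρ := ρ)).2 T
  have hT : ∑ x, φ x • ρ x = c • (LinearMap.id : V →ₗ[ℂ] V) := by
    have := congrArg Representation.IntertwiningMap.toLinearMap hc
    ext v
    have := congrArg (fun f : V →ₗ[ℂ] V => f v) this
    exact this.symm
  have htr := congrArg (LinearMap.trace ℂ V) hT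
  simp only [map_sum, map_smul, LinearMap.trace_id, smul_eq_mul] at htr
  have : c * (Module.finrank ℂ V : ℂ) = 0 := htr.symm.trans h0
  have hd : (Module.finrank ℂ V : ℂ) ≠ 0 := by
    exact_mod_cast (Module.finrank_pos (R := ℂ) (M := V)).ne'
  rw [hT, (mul_eq_zero.mp this).resolve_right hd, zero_smul]

/-- The representation carried by a left ideal of the group algebra. -/
noncomputable def idealRep {G : Type} [Group G]
    (S : Submodule (MonoidAlgebra ℂ G) (MonoidAlgebra ℂ G)) : Representation ℂ G S :=
  ((Algebra.lsmul ℂ ℂ S : MonoidAlgebra ℂ G →ₐ[ℂ] _) :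
    MonoidAlgebra ℂ G →* Module.End ℂ S).comp (MonoidAlgebra.of ℂ G)

theorem idealRep_apply {G : Type} [Group G]
    (S : Submodule (MonoidAlgebra ℂ G) (MonoidAlgebra ℂ G)) (g : G) (s : S) :
    idealRep S g s = MonoidAlgebra.of ℂ G g • s := rfl

theorem idealRep_irr {G : Type} [Group G]
    (S : Submodule (MonoidAlgebra ℂ G) (MonoidAlgebra ℂ G))
    (hS : IsSimpleModule (MonoidAlgebra ℂ G) S) : IsIrreducibleRep (idealRep S) := by
  refine ⟨IsSimpleModule.nontrivial (MonoidAlgebra ℂ G) S, fun U hU => ?_⟩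
  let U' : Submodule (MonoidAlgebra ℂ G) S :=
    { U with
      smul_mem' := by
        intro c v hv
        induction c using MonoidAlgebra.induction_on with
        | of g => exact hU g v hv
        | add x y hx hy => rw [add_smul]; exact U.add_mem hx hy
        | smul r x hx => rw [smul_assoc]; exact U.smul_mem r hx }
  rcases eq_bot_or_eq_top U' with h | h
  · left
    ext x
    have : x ∈ U' ↔ x ∈ (⊥ : Submodule (MonoidAlgebra ℂ G) S) := by rw [h]
    exact this
  · right
    ext x
    have : x ∈ U' ↔ x ∈ (⊤ : Submodule (MonoidAlgebra ℂ G) S) := by rw [h]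
    exact this

theorem phi_zero {G : Type} [Group G] [Fintype G] (φ : G → ℂ)
    (h : ∀ (W : Type) [AddCommGroup W] [Module ℂ W] [FiniteDimensional ℂ W]
      (π : Representation ℂ G W), IsIrreducibleRep π → ∑ g, φ g • π g = 0) : ∀ g, φ g = 0 := by
  have : Module.Finite ℂ (MonoidAlgebra ℂ G) := inferInstance
  have : NeZero (Nat.card G : ℂ) := ⟨by simp⟩
  let a : MonoidAlgebra ℂ G := ∑ g, φ g • MonoidAlgebra.of ℂ G g
  have hker : ∀ x ∈ sSup { m : Submodule (MonoidAlgebra ℂ G) (MonoidAlgebra ℂ G) |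
      IsSimpleModule (MonoidAlgebra ℂ G) m }, a * x = 0 := by
    intro x hx
    rw [sSup_eq_iSup'] at hx
    induction hx using Submodule.iSup_induction' with
    | mem S x hx =>
      have : FiniteDimensional ℂ S.1 :=
        inferInstanceAs (FiniteDimensional ℂ (S.1.restrictScalars ℂ))
      have h1 := h S.1 (idealRep S.1) (idealRep_irr S.1 S.2)
      have h2 := congrArg (fun f : S.1 →ₗ[ℂ] S.1 => ((f ⟨x, hx⟩ : S.1) : MonoidAlgebra ℂ G)) h1
      simpa [LinearMap.sum_apply, idealRep_apply, a, Finset.sum_mul, -MonoidAlgebra.smul_single,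
        -MonoidAlgebra.of_apply] using h2
    | zero => simp
    | add x y _ _ hx hy => rw [mul_add, hx, hy, add_zero]
  have ha : a = 0 := by
    rw [← mul_one a]
    apply hker
    rw [IsSemisimpleModule.sSup_simples_eq_top]
    trivial
  intro g
  have h3 := congrArg (fun b : MonoidAlgebra ℂ G => b.coeff g) ha
  classical
  simpa [a, MonoidAlgebra.coeff_sum, Finsupp.single_apply] using h3

/-- Parseval identity for finite groups: for `f₁ f₂ : G → ℂ`,
`∑_x f₁(x) f₂(x⁻¹) = (1/|G|) ∑_{Π ∈ Ĝ} d_Π · tr(Π(f₁) Π(f₂))`, the sum running over a complete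
set of representatives of the irreducible complex representations of `G`. -/
theorem parseval_identity (G : Type) [Group G] [Fintype G]
    (ι : Type) [Fintype ι] (V : ι → Type)
    [∀ i, AddCommGroup (V i)] [∀ i, Module ℂ (V i)] [∀ i, FiniteDimensional ℂ (V i)]
    (ρ : ∀ i, Representation ℂ G (V i))
    (hirr : ∀ i, IsIrreducibleRep (ρ i))
    (hdist : ∀ i j, i ≠ j → ¬ RepEquiv (ρ i) (ρ j))
    (hcomplete : ∀ (W : Type) [AddCommGroup W] [Module ℂ W] [FiniteDimensional ℂ W]
      (π : Representation ℂ G W), IsIrreducibleRep π → ∃ i, RepEquiv π (ρ i))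
    (f₁ f₂ : G → ℂ) :
    ∑ x : G, f₁ x * f₂ x⁻¹
      = (Fintype.card G : ℂ)⁻¹ *
          ∑ i, (Module.finrank ℂ (V i) : ℂ) *
            LinearMap.trace ℂ (V i)
              ((∑ x : G, f₁ x • ρ i x) ∘ₗ (∑ x : G, f₂ x • ρ i x)) := by
  classical
  have : Invertible (Nat.card G : ℂ) := invertibleOfNonzero (by simp)
  have hI : ∀ i, (ρ i).IsIrreducible := fun i => isIrr_of _ (hirr i)
  have hN : (Fintype.card G : ℂ) ≠ 0 := by simp
  have horth : ∀ i j, ∑ g : G, (ρ i).character g⁻¹ * (ρ j).character g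
      = if i = j then (Fintype.card G : ℂ) else 0 := by
    intro i j
    have h := Representation.char_orthonormal (ρ j) (ρ i)
    rw [Nat.card_eq_fintype_card, inv_mul_eq_iff_eq_mul₀ hN] at h
    simp_rw [mul_comm ((ρ i).character _)]
    rw [h]
    by_cases hij : i = j
    · subst hij
      rw [if_pos ⟨Representation.Equiv.refl (ρ i)⟩]
      simp
    · rw [if_neg, if_neg hij, mul_zero]
      rintro ⟨e⟩
      exact hdist i j hij ⟨e.toLinearEquiv, fun g v => e.toIntertwiningMap.isIntertwining _ _ g v⟩
  have hchar : ∀ i (g x : G), (ρ i).character (g⁻¹ * x * g) = (ρ i).character x := by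
    intro i g x
    simpa using (ρ i).char_conj x g⁻¹
  have key : ∀ g : G, ∑ i, (Module.finrank ℂ (V i) : ℂ) * (ρ i).character g⁻¹
      - (if g = 1 then (Fintype.card G : ℂ) else 0) = 0 := by
    apply phi_zero
    intro W _ _ _ π hπ
    obtain ⟨j, e, he⟩ := hcomplete W π hπ
    apply class_sum_zero π hπ
    · intro g x
      have h1 : (g⁻¹ * x * g)⁻¹ = g⁻¹ * x⁻¹ * g := by group
      have h2 : g⁻¹ * x * g = 1 ↔ x = 1 := by
        constructor
        · intro h
          have : x = g * (g⁻¹ * x * g) * g⁻¹ := by group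
          rw [this, h]; group
        · rintro rfl; group
      simp only [h1, hchar, h2]
    · have hc : π.character = (ρ j).character :=
        Representation.char_iso (Representation.Equiv.mk e (fun g => LinearMap.ext (he g)))
      rw [hc]
      simp_rw [sub_mul, Finset.sum_sub_distrib, Finset.sum_mul]
      rw [Finset.sum_comm]
      simp_rw [mul_assoc, ← Finset.mul_sum, horth]
      simp [mul_comm]
  have key' : ∀ g : G, ∑ i, (Module.finrank ℂ (V i) : ℂ) * (ρ i).character g
      = if g = 1 then (Fintype.card G : ℂ) else 0 := by
    intro g
    have h := sub_eq_zero.mp (key g⁻¹)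
    simpa using h
  have htr : ∀ i, LinearMap.trace ℂ (V i)
      ((∑ x : G, f₁ x • ρ i x) ∘ₗ (∑ x : G, f₂ x • ρ i x))
      = ∑ x, ∑ y, f₁ x * f₂ y * (ρ i).character (x * y) := by
    intro i
    change LinearMap.trace ℂ (V i) ((∑ x : G, f₁ x • ρ i x) * (∑ x : G, f₂ x • ρ i x)) = _
    rw [Finset.sum_mul_sum]
    simp only [map_sum, smul_mul_smul_comm, map_smul, smul_eq_mul, ← map_mul,
      Representation.character]
  have hsum : ∑ i, (Module.finrank ℂ (V i) : ℂ) *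
      LinearMap.trace ℂ (V i) ((∑ x : G, f₁ x • ρ i x) ∘ₗ (∑ x : G, f₂ x • ρ i x))
      = ∑ x, ∑ y, f₁ x * f₂ y * ∑ i, (Module.finrank ℂ (V i) : ℂ) * (ρ i).character (x * y) := by
    simp_rw [htr, Finset.mul_sum]
    rw [Finset.sum_comm]
    refine Finset.sum_congr rfl fun x _ => ?_
    rw [Finset.sum_comm]
    refine Finset.sum_congr rfl fun y _ => Finset.sum_congr rfl fun i _ => ?_
    ring
  rw [hsum]
  simp_rw [key', mul_eq_one_iff_inv_eq]
  simp only [mul_ite, mul_zero, Finset.sum_ite_eq, Finset.mem_univ, if_true]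
  rw [← Finset.sum_mul, mul_comm, mul_assoc, mul_inv_cancel₀ hN, mul_one]
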